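/- Let Z_1, …, Z_{n+1} be exchangeable real-valued random variables and let α ∈ (0,1). Let Q denote the ⌈(1−α)(n+1)⌉-th smallest value among Z_1, …, Z_n (with Q = +∞ if ⌈(1−α)(n+1)⌉ > n). Then P(Z_{n+1} ≤ Q) ≥ 1 − α. -/

import Mathlib

/-!
Let `k = ⌈(1-α)(n+1)⌉` and say that index `j` has small rank in `x : Fin (n+1) → ℝ` if fewer than
`k` coordinates of `x` are strictly smaller than `x j`. Ties only help, so at least `k` indices have
small rank in any `x` (`le_card_smallRank`). By exchangeability all `n+1` indices have small
rank with the same probability (`measure_smallRank_eq`), and these probabilities sum to the expected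
number of indices of small rank, which is at least `k`. Hence the last index has small rank with
probability at least `k / (n+1) ≥ 1 - α`. If the last index has small rank, then fewer than `k` of
`Z_1, …, Z_n` lie strictly below `Z_{n+1}`, so `Z_{n+1}` is at most the `k`-th smallest of them
(`le_kthSmallest`). When `k > n` the bound is `+∞` and the event is everything.
-/

open MeasureTheory

/-- The `k`-th smallest value (1-indexed) among `S 0, …, S (m-1)`. -/
noncomputable def kthSmallest {m : ℕ} (S : Fin m → ℝ) (k : ℕ) : ℝ :=
  ((Finset.univ.val.map S).sort (· ≤ ·)).getD (k - 1) 0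

/-- If fewer than `k` of the values lie strictly below `z`, then `z` is at most the `k`-th smallest
value: otherwise the first `k` entries of the sorted list would all be below `z`. -/
lemma le_kthSmallest {m : ℕ} (S : Fin m → ℝ) (k : ℕ) (hk : 1 ≤ k) (hkm : k ≤ m) (z : ℝ)
    (h : (Finset.univ.filter fun i => S i < z).card < k) : z ≤ kthSmallest S k := by
  by_contra hlt
  push Not at hlt
  unfold kthSmallest at hlt
  set l := (Finset.univ.val.map S).sort (· ≤ ·) with hl
  have hlen : l.length = m := by simp [hl]
  have hcount : l.countP (fun a => decide (a < z))
      = (Finset.univ.filter fun i => S i < z).card := by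
    rw [← Multiset.coe_countP, hl, Multiset.sort_eq, Multiset.countP_map]
    rfl
  have hsorted : l.Pairwise (· ≤ ·) := Multiset.pairwise_sort _ _
  have hk' : k - 1 < l.length := by omega
  rw [List.getD_eq_getElem _ _ hk'] at hlt
  have htake : (l.take k).countP (fun a => decide (a < z)) = (l.take k).length := by
    rw [List.countP_eq_length]
    intro a ha
    obtain ⟨i, hi, rfl⟩ := List.mem_take_iff_getElem.mp ha
    have hik : i ≤ k - 1 := by omega
    have : l[i] ≤ l[k - 1] := by
      rcases hik.eq_or_lt with rfl | hik
      · exact le_rfl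
      · exact List.pairwise_iff_getElem.mp hsorted i (k - 1) _ hk' hik
    simpa using this.trans_lt hlt
  have hle := (List.take_sublist k l).countP_le (p := fun a => decide (a < z))
  rw [htake, hcount, List.length_take] at hle
  omega

/-- The vectors in which fewer than `k` coordinates are strictly smaller than the `j`-th one. -/
def smallRank (n k : ℕ) (j : Fin (n + 1)) : Set (Fin (n + 1) → ℝ) :=
  {x | (Finset.univ.filter fun i => x i < x j).card < k}

lemma measurableSet_smallRank (n k : ℕ) (j : Fin (n + 1)) :
    MeasurableSet (smallRank n k j) := by
  have hm : Measurable fun x : Fin (n + 1) → ℝ =>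
      (Finset.univ.filter fun i => x i < x j).card := by
    simp only [Finset.card_filter]
    refine Finset.measurable_sum _ fun i _ => ?_
    exact Measurable.ite (measurableSet_lt (measurable_pi_apply i) (measurable_pi_apply j))
      measurable_const measurable_const
  exact hm (measurableSet_Iio (a := k))

open Classical in
/-- The first `k` indices of a sorting permutation of `x` all have small rank. -/
lemma le_card_smallRank (n k : ℕ) (hk : k ≤ n + 1) (x : Fin (n + 1) → ℝ) :
    k ≤ (Finset.univ.filter fun j => x ∈ smallRank n k j).card := by
  set s := Tuple.sort x
  have hmono : Monotone (x ∘ s) := Tuple.monotone_sort x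
  let f : Fin k → Fin (n + 1) := fun a => s (Fin.castLE hk a)
  have hf : Function.Injective f := s.injective.comp (Fin.castLE_injective hk)
  have hsub : Finset.univ.image f ⊆ Finset.univ.filter fun j => x ∈ smallRank n k j := by
    intro j hj
    obtain ⟨a, -, rfl⟩ := Finset.mem_image.mp hj
    refine Finset.mem_filter.mpr ⟨Finset.mem_univ _, ?_⟩
    have hsub' : (Finset.univ.filter fun i => x i < x (f a))
        ⊆ (Finset.Iio (Fin.castLE hk a)).image s := by
      intro i hi
      refine Finset.mem_image.mpr ⟨s.symm i, ?_, by simp⟩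
      rw [Finset.mem_Iio]
      by_contra hge
      have := hmono (not_lt.mp hge)
      simp only [Function.comp, Equiv.apply_symm_apply] at this
      exact absurd (Finset.mem_filter.mp hi).2 (not_lt.mpr this)
    have hcard := (Finset.card_le_card hsub').trans Finset.card_image_le
    rw [Fin.card_Iio] at hcard
    exact hcard.trans_lt a.2
  have := Finset.card_le_card hsub
  rwa [Finset.card_image_of_injective _ hf, Finset.card_univ, Fintype.card_fin] at this

/-- For an exchangeable law, all indices are equally likely to have small rank: transpose `j` with
the last index. -/
lemma measure_smallRank_eq (n k : ℕ) (ν : Measure (Fin (n + 1) → ℝ))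
    (hν : ∀ σ : Equiv.Perm (Fin (n + 1)), ν.map (fun x i => x (σ i)) = ν) (j : Fin (n + 1)) :
    ν (smallRank n k j) = ν (smallRank n k (Fin.last n)) := by
  set σ := Equiv.swap j (Fin.last n)
  have hm : Measurable fun (x : Fin (n + 1) → ℝ) i => x (σ i) :=
    measurable_pi_lambda _ fun i => measurable_pi_apply _
  conv_lhs => rw [← hν σ, Measure.map_apply hm (measurableSet_smallRank n k j)]
  congr 1
  ext x
  simp only [smallRank, Set.mem_preimage, Set.mem_ofPred_eq]
  have hσ : σ j = Fin.last n := Equiv.swap_apply_left _ _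
  rw [hσ]
  have : (Finset.univ.filter fun i => x (σ i) < x (Fin.last n)).card
      = (Finset.univ.filter fun i => x i < x (Fin.last n)).card :=
    Finset.card_equiv σ (by simp)
  rw [this]

/-- The expected number of indices of small rank is at least `k`. -/
lemma le_mul_measure_smallRank (n k : ℕ) (hk : k ≤ n + 1) (ν : Measure (Fin (n + 1) → ℝ))
    [IsProbabilityMeasure ν]
    (hν : ∀ σ : Equiv.Perm (Fin (n + 1)), ν.map (fun x i => x (σ i)) = ν) :
    (k : ENNReal) ≤ (n + 1) * ν (smallRank n k (Fin.last n)) := by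
  classical
  calc (k : ENNReal) = ∫⁻ _, (k : ENNReal) ∂ν := by simp
    _ ≤ ∫⁻ x, ∑ j, (smallRank n k j).indicator 1 x ∂ν := by
        refine lintegral_mono fun x => ?_
        simp only [Set.indicator_apply, Pi.one_apply, Finset.sum_boole]
        exact_mod_cast le_card_smallRank n k hk x
    _ = ∑ j, ν (smallRank n k j) := by
        rw [lintegral_finsetSum _ fun j _ =>
          measurable_one.indicator (measurableSet_smallRank n k j)]
        exact Finset.sum_congr rfl fun j _ =>
          lintegral_indicator_one (measurableSet_smallRank n k j)
    _ = (n + 1) * ν (smallRank n k (Fin.last n)) := by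
        simp [measure_smallRank_eq n k ν hν]

/-- For exchangeable real random variables `Z_1, …, Z_{n+1}` and
`α ∈ (0,1)`, letting `Q` be the `⌈(1−α)(n+1)⌉`-th smallest value among `Z_1, …, Z_n`
(`+∞` if `⌈(1−α)(n+1)⌉ > n`), we have `P(Z_{n+1} ≤ Q) ≥ 1 − α`. -/
theorem conformal_quantile_coverage
    {Ω : Type*} [MeasurableSpace Ω] (μ : Measure Ω) [IsProbabilityMeasure μ]
    (n : ℕ) (Z : Fin (n+1) → Ω → ℝ) (hZ : ∀ i, Measurable (Z i))
    (hexch : ∀ σ : Equiv.Perm (Fin (n+1)),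
      Measure.map (fun ω => fun i => Z (σ i) ω) μ
        = Measure.map (fun ω => fun i => Z i ω) μ)
    (α : ℝ) (hα : α ∈ Set.Ioo (0:ℝ) 1) :
    ENNReal.ofReal (1 - α) ≤
      μ {ω | ((Z (Fin.last n) ω : ℝ) : EReal) ≤
          (if ⌈(1 - α) * (n + 1)⌉₊ ≤ n
            then ((kthSmallest (fun i : Fin n => Z i.castSucc ω)
                    ⌈(1 - α) * (n + 1)⌉₊ : ℝ) : EReal)
            else (⊤ : EReal))} := by
  set k := ⌈(1 - α) * (n + 1)⌉₊ with hkdef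
  have hpos : 0 < (1 - α) * ((n : ℝ) + 1) := mul_pos (by linarith [hα.2]) (by positivity)
  have hk1 : 1 ≤ k := Nat.ceil_pos.mpr hpos
  by_cases hkn : k ≤ n
  · simp only [hkn, if_true, EReal.coe_le_coe_iff]
    have hmZ : Measurable fun ω i => Z i ω := measurable_pi_lambda _ hZ
    set ν := μ.map fun ω i => Z i ω with hνdef
    have : IsProbabilityMeasure ν := Measure.isProbabilityMeasure_map hmZ.aemeasurable
    have hν : ∀ σ : Equiv.Perm (Fin (n + 1)), ν.map (fun x i => x (σ i)) = ν := by
      intro σ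
      rw [hνdef, Measure.map_map
        (measurable_pi_lambda _ fun i => measurable_pi_apply _) hmZ]
      exact hexch σ
    have hmain := le_mul_measure_smallRank n k (by omega) ν hν
    have hlow : ENNReal.ofReal (1 - α) ≤ ν (smallRank n k (Fin.last n)) := by
      have h1 : (n + 1 : ENNReal) * ENNReal.ofReal (1 - α) ≤ k := by
        have : (n + 1 : ENNReal) = ENNReal.ofReal ((n : ℝ) + 1) := by
          rw [ENNReal.ofReal_add (by positivity) zero_le_one]; simp
        rw [this, ← ENNReal.ofReal_mul (by positivity), ← ENNReal.ofReal_natCast k, mul_comm]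
        exact ENNReal.ofReal_le_ofReal (Nat.le_ceil _)
      exact (ENNReal.mul_le_mul_iff_right (by simp) (by finiteness)).mp (h1.trans hmain)
    refine hlow.trans ?_
    rw [hνdef, Measure.map_apply hmZ (measurableSet_smallRank n k _)]
    refine measure_mono fun ω hω => le_kthSmallest _ k hk1 hkn _ (lt_of_le_of_lt ?_ hω)
    refine Finset.card_le_card_of_injOn Fin.castSucc ?_ (Fin.castSucc_injective n).injOn
    intro i hi
    simpa using hi
  · simp only [hkn, if_false, le_top, Set.ofPred_true, measure_univ]
    exact ENNReal.ofReal_le_one.mpr (by linarith [hα.1])
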